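/- Under Assumption H1 and the Bregman setting with g semiconvex of modulus ρ ≥ 0 and 0 < ε, ε·L < m, ε·ρ < m, let t(x) denote the unique element of T(x). Then for every x ∈ ℝ^n and every ν ∈ ∂_P g(x): ((m − ερ)/(2ε²))·‖x − t(x)‖² ≤ G(x) ≤ ‖∇f(x) + ν‖²/(2(m − ερ)), and consequently ‖x − t(x)‖ ≤ (ε/(m − ερ))·‖∇f(x) + ν‖. -/

import Mathlib

open Set Metric Filter Topology
open scoped RealInnerProductSpace

noncomputable section

variable {E : Type*} [NormedAddCommGroup E] [InnerProductSpace ℝ E] [FiniteDimensional ℝ E]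

/-- The proximal subdifferential of `ψ` at `x`. -/
def proxSubdiff (ψ : E → ℝ) (x : E) : Set E :=
  {ξ | ∃ ρ > (0:ℝ), ∃ η > (0:ℝ), ∀ y, ‖y - x‖ < η →
    ψ y ≥ ψ x + ⟪ξ, y - x⟫ - ρ * ‖y - x‖ ^ 2}

/-- The Bregman distance generated by `K` (with gradient `K'`). -/
def bregD (K : E → ℝ) (K' : E → E) (x y : E) : ℝ := K y - K x - ⟪K' x, y - x⟫

/-- The Bregman proximal mapping: the set of global minimizers of
`y ↦ ⟪∇f x, y - x⟫ + g y + D(x,y)/ε`. -/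
def bregT (f' : E → E) (g : E → ℝ) (K : E → ℝ) (K' : E → E) (ε : ℝ) (x : E) : Set E :=
  {y | ∀ z, ⟪f' x, y - x⟫ + g y + bregD K K' x y / ε ≤ ⟪f' x, z - x⟫ + g z + bregD K K' x z / ε}

/-- The Bregman proximal envelope. -/
def bregEnv (f : E → ℝ) (f' : E → E) (g : E → ℝ) (K : E → ℝ) (K' : E → E) (ε : ℝ) (x : E) : ℝ :=
  ⨅ y : E, (f x + ⟪f' x, y - x⟫ + g y + bregD K K' x y / ε)

/-!
For fixed `x`, the function `φ` that the Bregman proximal mapping minimizes is strongly convex with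
modulus `c = m / ε - ρ`, since the curvature `m / ε` of the Bregman term outweighs the lack of
convexity `ρ` of `g`. For a strongly convex function every proximal subgradient is a global one,
with the quadratic term `c / 2 * ‖y - x‖ ^ 2` to spare. Applied to the subgradient `0` at the
minimizer this is the lower bound on `φ x - φ (t x) = F x - E x`; applied to the subgradient
`f' x + ν` at `x` it is the upper bound, after minimizing the quadratic minorant.
-/

section StrongConvexity

variable {V : Type*} [NormedAddCommGroup V] [InnerProductSpace ℝ V]
  {s : Set V} {φ ψ : V → ℝ} {c d : ℝ} {x y ξ : V}

theorem strongConvexOn_neg_iff :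
    StrongConvexOn s (-c) φ ↔ ConvexOn ℝ s fun y ↦ φ y + c / 2 * ‖y‖ ^ 2 := by
  simp only [strongConvexOn_iff_convex, neg_div, neg_mul, sub_neg_eq_add]

theorem strongConvexOn_add (hφ : StrongConvexOn s c φ) (hψ : StrongConvexOn s d ψ) :
    StrongConvexOn s (c + d) fun y ↦ φ y + ψ y := by
  rw [strongConvexOn_iff_convex] at hφ hψ ⊢
  convert! hφ.add hψ using 2
  simp only [Pi.add_apply]
  ring

theorem strongConvexOn_const_mul (hd : 0 ≤ d) (hφ : StrongConvexOn s c φ) :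
    StrongConvexOn s (d * c) fun y ↦ d * φ y := by
  rw [strongConvexOn_iff_convex] at hφ ⊢
  convert! hφ.smul hd using 2
  simp only [smul_eq_mul]
  ring

theorem strongConvexOn_add_inner_add_const (hφ : StrongConvexOn s c φ) (v : V) (b : ℝ) :
    StrongConvexOn s c fun y ↦ φ y + (⟪v, y⟫ + b) := by
  have haffine : ConvexOn ℝ s fun y ↦ ⟪v, y⟫ + b :=
    ((innerₛₗ ℝ v).convexOn hφ.1).add_const b
  simpa only [add_zero] using strongConvexOn_add hφ (strongConvexOn_zero.2 haffine)

theorem strongConvexOn_of_add_inner_add_sq_le {φ' : V → V} (hs : Convex ℝ s)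
    (h : ∀ x ∈ s, ∀ y ∈ s, φ x + ⟪φ' x, y - x⟫ + c / 2 * ‖y - x‖ ^ 2 ≤ φ y) :
    StrongConvexOn s c φ := by
  refine ⟨hs, fun x hx y hy a b ha hb hab ↦ ?_⟩
  obtain rfl : a = 1 - b := by linarith
  set z := (1 - b) • x + b • y with hz
  have hzs : z ∈ s := hs hx hy ha hb hab
  have hzx := mul_le_mul_of_nonneg_left (h z hzs x hx) ha
  have hzy := mul_le_mul_of_nonneg_left (h z hzs y hy) hb
  have ex : x - z = b • (x - y) := by rw [hz]; module
  have ey : y - z = (-(1 - b)) • (x - y) := by rw [hz]; module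
  simp only [ex, ey, inner_smul_right, norm_smul, mul_pow, Real.norm_eq_abs, sq_abs] at hzx hzy
  simp only [smul_eq_mul]
  linarith

theorem zero_mem_proxSubdiff_of_isLocalMin (h : IsLocalMin φ x) : 0 ∈ proxSubdiff φ x := by
  obtain ⟨η, hη, hmin⟩ := Metric.eventually_nhds_iff.1 h
  refine ⟨1, one_pos, η, hη, fun y hy ↦ ?_⟩
  have hxy : φ x ≤ φ y := hmin (by rwa [dist_eq_norm])
  rw [inner_zero_left]
  linarith [sq_nonneg ‖y - x‖]

theorem add_inner_add_sq_le_of_mem_proxSubdiff (hφ : StrongConvexOn s c φ)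
    (hξ : ξ ∈ proxSubdiff φ x) (hx : x ∈ s) (hy : y ∈ s) :
    φ x + ⟪ξ, y - x⟫ + c / 2 * ‖y - x‖ ^ 2 ≤ φ y := by
  obtain ⟨r, -, η, hη, hr⟩ := hξ
  have hcont : Continuous fun l : ℝ ↦ x + l • (y - x) := by fun_prop
  have hnear : ∀ᶠ l : ℝ in 𝓝[>] 0, x + l • (y - x) ∈ ball x η :=
    nhdsWithin_le_nhds <| hcont.continuousAt.eventually_mem <| isOpen_ball.mem_nhds <| by
      simpa using hη
  have hseg : ∀ᶠ l : ℝ in 𝓝[>] 0,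
      φ x + ⟪ξ, y - x⟫ + (c / 2 * (1 - l) - r * l) * ‖y - x‖ ^ 2 ≤ φ y := by
    filter_upwards [hnear, Ioo_mem_nhdsGT one_pos] with l hl ⟨hl₀, hl₁⟩
    have hupper := hφ.2 hx hy (sub_nonneg.2 hl₁.le) hl₀.le (sub_add_cancel 1 l)
    have hlower := hr (x + l • (y - x)) (mem_ball_iff_norm.1 hl)
    have hpoint : (1 - l) • x + l • y = x + l • (y - x) := by module
    rw [hpoint, norm_sub_rev] at hupper
    simp only [smul_eq_mul, add_sub_cancel_left, inner_smul_right, norm_smul, mul_pow,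
      Real.norm_eq_abs, sq_abs] at hupper hlower
    refine le_of_mul_le_mul_left ?_ hl₀
    linarith
  have hlim : Tendsto (fun l : ℝ ↦ φ x + ⟪ξ, y - x⟫ + (c / 2 * (1 - l) - r * l) * ‖y - x‖ ^ 2)
      (𝓝[>] 0) (𝓝 (φ x + ⟪ξ, y - x⟫ + c / 2 * ‖y - x‖ ^ 2)) :=
    tendsto_nhdsWithin_of_tendsto_nhds (Continuous.tendsto' (by fun_prop) _ _ (by simp))
  exact le_of_tendsto hlim hseg

theorem mul_sq_norm_sub_le_of_isLocalMin (hφ : StrongConvexOn s c φ) (hmin : IsLocalMin φ x)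
    (hx : x ∈ s) (hy : y ∈ s) : c / 2 * ‖y - x‖ ^ 2 ≤ φ y - φ x := by
  have h := add_inner_add_sq_le_of_mem_proxSubdiff hφ
    (zero_mem_proxSubdiff_of_isLocalMin hmin) hx hy
  rw [inner_zero_left] at h
  linarith

theorem sub_le_sq_norm_div_of_mem_proxSubdiff (hc : 0 < c) (hφ : StrongConvexOn s c φ)
    (hξ : ξ ∈ proxSubdiff φ x) (hx : x ∈ s) (hy : y ∈ s) :
    φ x - φ y ≤ ‖ξ‖ ^ 2 / (2 * c) := by
  have hminorant := add_inner_add_sq_le_of_mem_proxSubdiff hφ hξ hx hy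
  have hsquare : ‖ξ + c • (y - x)‖ ^ 2 = ‖ξ‖ ^ 2 + 2 * c * (⟪ξ, y - x⟫ + c / 2 * ‖y - x‖ ^ 2) := by
    rw [norm_add_sq_real, inner_smul_right, norm_smul, mul_pow, Real.norm_eq_abs, sq_abs]
    ring
  rw [le_div_iff₀ (by positivity)]
  nlinarith [sq_nonneg ‖ξ + c • (y - x)‖]

theorem norm_sub_le_div_of_mem_proxSubdiff (hc : 0 < c) (hφ : StrongConvexOn s c φ)
    (hmin : IsLocalMin φ x) (hξ : ξ ∈ proxSubdiff φ y) (hx : x ∈ s) (hy : y ∈ s) :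
    ‖y - x‖ ≤ ‖ξ‖ / c := by
  have h : c / 2 * ‖y - x‖ ^ 2 ≤ ‖ξ‖ ^ 2 / (2 * c) :=
    (mul_sq_norm_sub_le_of_isLocalMin hφ hmin hx hy).trans
      (sub_le_sq_norm_div_of_mem_proxSubdiff hc hφ hξ hy hx)
  rw [← sq_le_sq₀ (norm_nonneg _) (by positivity)]
  calc ‖y - x‖ ^ 2 = 2 / c * (c / 2 * ‖y - x‖ ^ 2) := by field_simp
    _ ≤ 2 / c * (‖ξ‖ ^ 2 / (2 * c)) := by gcongr
    _ = (‖ξ‖ / c) ^ 2 := by field_simp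

end StrongConvexity

section BregmanModel

variable {V : Type*} [NormedAddCommGroup V] [InnerProductSpace ℝ V]
  {f g K : V → ℝ} {f' K' : V → V} {m ε ρ : ℝ} {x s ν : V}

/-- The model of `F = f + g` around `x` whose minimizers over `y` form the Bregman proximal mapping
`bregT`. The constant `f x` is left out, as it is in `bregT`. -/
def bregModel (f' : V → V) (g K : V → ℝ) (K' : V → V) (ε : ℝ) (x y : V) : ℝ :=
  ⟪f' x, y - x⟫ + g y + bregD K K' x y / ε

theorem isLocalMin_bregModel_of_mem_bregT (hs : s ∈ bregT f' g K K' ε x) :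
    IsLocalMin (bregModel f' g K K' ε x) s :=
  Eventually.of_forall hs

theorem bregD_nonneg {y : V} (hm : 0 ≤ m)
    (h : K x + ⟪K' x, y - x⟫ + m / 2 * ‖y - x‖ ^ 2 ≤ K y) : 0 ≤ bregD K K' x y := by
  have hquad : 0 ≤ m / 2 * ‖y - x‖ ^ 2 := by positivity
  rw [bregD]
  linarith

theorem bregModel_self : bregModel f' g K K' ε x x = g x := by
  simp [bregModel, bregD]

theorem add_sub_bregEnv_of_mem_bregT (hs : s ∈ bregT f' g K K' ε x) :
    f x + g x - bregEnv f f' g K K' ε x =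
      bregModel f' g K K' ε x x - bregModel f' g K K' ε x s := by
  have hleast : IsLeast (range fun y ↦ f x + bregModel f' g K K' ε x y)
      (f x + bregModel f' g K K' ε x s) :=
    ⟨mem_range_self s, forall_mem_range.2 fun y ↦ add_le_add_right (hs y) (f x)⟩
  have henv : bregEnv f f' g K K' ε x = f x + bregModel f' g K K' ε x s := by
    simpa only [bregEnv, bregModel, add_assoc] using! hleast.csInf_eq
  rw [henv, bregModel_self, add_sub_add_left_eq_sub]

theorem strongConvexOn_bregModel {S : Set V} (hε : 0 ≤ ε) (hg : StrongConvexOn S (-ρ) g)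
    (hK : StrongConvexOn S m K) (x : V) :
    StrongConvexOn S (m / ε - ρ) (bregModel f' g K K' ε x) := by
  have h := strongConvexOn_add_inner_add_const
    (strongConvexOn_add hg (strongConvexOn_const_mul (inv_nonneg.2 hε) hK))
    (f' x - ε⁻¹ • K' x) (-⟪f' x, x⟫ + ε⁻¹ * (⟪K' x, x⟫ - K x))
  convert! h using 1
  · ring
  · ext y
    simp only [bregModel, bregD, inner_sub_left, inner_sub_right, real_inner_smul_left]
    ring

theorem add_mem_proxSubdiff_bregModel (hε : 0 ≤ ε) (hD : ∀ y, 0 ≤ bregD K K' x y)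
    (hν : ν ∈ proxSubdiff g x) :
    f' x + ν ∈ proxSubdiff (bregModel f' g K K' ε x) x := by
  obtain ⟨r, hr, η, hη, h⟩ := hν
  refine ⟨r, hr, η, hη, fun y hy ↦ ?_⟩
  have hD_div : 0 ≤ bregD K K' x y / ε := div_nonneg (hD y) hε
  rw [bregModel_self, bregModel, inner_add_left]
  linarith [h y hy]

theorem stmt14_general
    (hf : ∀ x, HasFDerivAt f (innerSL ℝ (f' x)) x)
    (hm : 0 ≤ m) (hK : ∀ x, HasFDerivAt K (innerSL ℝ (K' x)) x)
    (hKstrong : ∀ x y, K x + ⟪K' x, y - x⟫ + m / 2 * ‖y - x‖ ^ 2 ≤ K y)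
    (hε : 0 < ε) (hsemi : ConvexOn ℝ univ fun y ↦ g y + ρ / 2 * ‖y‖ ^ 2) (hερ : ε * ρ < m)
    (hs : s ∈ bregT f' g K K' ε x) (hν : ν ∈ proxSubdiff g x) :
    (m - ε * ρ) / (2 * ε ^ 2) * ‖x - s‖ ^ 2 ≤ (f x + g x - bregEnv f f' g K K' ε x) / ε ∧
      (f x + g x - bregEnv f f' g K K' ε x) / ε ≤ ‖f' x + ν‖ ^ 2 / (2 * (m - ε * ρ)) ∧
      ‖x - s‖ ≤ ε / (m - ε * ρ) * ‖f' x + ν‖ := by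
  have hμ : 0 < m - ε * ρ := sub_pos.2 hερ
  have hmodulus : m / ε - ρ = (m - ε * ρ) / ε := by field_simp
  have hmodel : StrongConvexOn univ ((m - ε * ρ) / ε) (bregModel f' g K K' ε x) :=
    hmodulus ▸ strongConvexOn_bregModel hε.le (strongConvexOn_neg_iff.2 hsemi)
      (strongConvexOn_of_add_inner_add_sq_le convex_univ fun x _ y _ ↦ hKstrong x y) x
  have hmin := isLocalMin_bregModel_of_mem_bregT hs
  have hsub : f' x + ν ∈ proxSubdiff (bregModel f' g K K' ε x) x :=
    add_mem_proxSubdiff_bregModel hε.le (fun y ↦ bregD_nonneg hm (hKstrong x y)) hν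
  rw [add_sub_bregEnv_of_mem_bregT hs, le_div_iff₀ hε, div_le_iff₀ hε]
  refine ⟨?_, ?_, ?_⟩
  · convert! mul_sq_norm_sub_le_of_isLocalMin hmodel hmin (mem_univ s) (mem_univ x) using 1
    field_simp
  · convert! sub_le_sq_norm_div_of_mem_proxSubdiff (div_pos hμ hε) hmodel hsub (mem_univ x)
      (mem_univ s) using 1
    field_simp
  · convert! norm_sub_le_div_of_mem_proxSubdiff (div_pos hμ hε) hmodel hmin hsub (mem_univ s)
      (mem_univ x) using 1
    field_simp

end BregmanModel

/-- Bounds relating the displacement `‖x - t(x)‖`, the gap `G(x)` and the proximal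
subgradients of `F` when `g` is semiconvex. -/
theorem stmt14
    (f g : E → ℝ) (f' : E → E) (L : ℝ)
    (hL : 0 < L)
    (hf : ∀ x, HasGradientAt f (f' x) x)
    (hlip : ∀ x y, ‖f' x - f' y‖ ≤ L * ‖x - y‖)
    (hg : Continuous g)
    (hlevel : ∀ r : ℝ, Bornology.IsBounded {x : E | f x + g x ≤ r})
    (K : E → ℝ) (K' : E → E) (m M : ℝ)
    (hm : 0 < m) (hmM : m ≤ M)
    (hK : ∀ x, HasGradientAt K (K' x) x)
    (hKstrong : ∀ x y : E, K x + ⟪K' x, y - x⟫ + m / 2 * ‖y - x‖ ^ 2 ≤ K y)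
    (hKlip : ∀ x y, ‖K' x - K' y‖ ≤ M * ‖x - y‖)
    (ε : ℝ) (hε : 0 < ε)
    (ρ : ℝ) (hρ : 0 ≤ ρ)
    (hsemi : ConvexOn ℝ Set.univ (fun y : E => g y + ρ / 2 * ‖y‖ ^ 2))
    (hεL : ε * L < m) (hερ : ε * ρ < m)
    (t : E → E) (ht : ∀ x, bregT f' g K K' ε x = {t x}) :
    ∀ x : E, ∀ ν' ∈ proxSubdiff g x,
      (m - ε * ρ) / (2 * ε ^ 2) * ‖x - t x‖ ^ 2 ≤
        ((f x + g x) - bregEnv f f' g K K' ε x) / ε ∧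
      ((f x + g x) - bregEnv f f' g K K' ε x) / ε ≤
        ‖f' x + ν'‖ ^ 2 / (2 * (m - ε * ρ)) ∧
      ‖x - t x‖ ≤ ε / (m - ε * ρ) * ‖f' x + ν'‖ :=
  fun x _ hν ↦ stmt14_general (fun x ↦ (hf x).hasFDerivAt) hm.le (fun x ↦ (hK x).hasFDerivAt)
    hKstrong hε hsemi hερ (ht x ▸ mem_singleton (t x)) hν
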